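/- arXiv:math/9904090 — 2 statements merged into one kernel-verified Lean document; each statement's English description precedes it below -/
import Mathlib

section
/- For all integers a ≥ 1 and b ≥ 1: 4(ab - 3a - 3b + 5) + 4b(b-3) > 0 if and only if (b = 4 and a ≥ 4) or (b ≥ 5 and a ≥ 1). -/
/-- The `k = 2` case of Corollary 5.7. -/
theorem stmt_10 (a b : ℤ) (ha : 1 ≤ a) (hb : 1 ≤ b) :
    4*(a*b - 3*a - 3*b + 5) + 4*b*(b-3) > 0 ↔
      (b = 4 ∧ a ≥ 4) ∨ (b ≥ 5 ∧ a ≥ 1) := by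
  -- The `b`-only terms factor, so for `b ≥ 5` both summands have evident signs.
  have key : 4*(a*b - 3*a - 3*b + 5) + 4*b*(b-3) = 4*(a*(b-3) + (b-1)*(b-5)) := by ring
  rw [key]
  rcases le_or_gt 5 b with h | h
  · have h1 : 0 < a*(b-3) := mul_pos (by omega) (by omega)
    have h2 : 0 ≤ (b-1)*(b-5) := mul_nonneg (by omega) (by omega)
    constructor <;> intro _ <;> omega
  · interval_cases b <;> omega
end

section
/- For all integers k ≥ 4, a ≥ 1 and b ≥ 1: 4(ab - 3a - 3b + 5) + 2kb(b-3) > 0 if and only if b ≥ 4. -/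
/-- The `k ≥ 4` case of Corollary 5.7. -/
theorem stmt_12 (k a b : ℤ) (hk : 4 ≤ k) (ha : 1 ≤ a) (hb : 1 ≤ b) :
    4*(a*b - 3*a - 3*b + 5) + 2*k*b*(b-3) > 0 ↔ b ≥ 4 := by
  -- The expression factors as `(b - 3) * (4a - 12 + 2kb) - 16`.
  constructor
  · intro h
    by_contra hlt
    have hb3 : b ≤ 3 := by omega
    interval_cases b <;> linarith
  · intro h
    have hkb : 16 ≤ k * b := by nlinarith
    have hfac : 24 ≤ 4 * a - 12 + 2 * (k * b) := by linarith
    have hprod : 24 ≤ (b - 3) * (4 * a - 12 + 2 * (k * b)) := by nlinarith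
    linarith
end
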